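/- For every τ in the complex upper half-plane: (i) β(τ)·c(τ) = 4c(τ)³ + 1, and (ii) (α(τ)³ − 27)·(c(τ)³ + 1)·(8c(τ)³ − 1)² = 729·c(τ)³. -/

import Mathlib

open Complex

/-- The nome `q = exp(2πiτ)`. -/
noncomputable def nome (τ : ℂ) : ℂ := Complex.exp (2 * Real.pi * I * τ)

/-- Ramanujan's cubic continued fraction, as an infinite product:
`c(τ) = q^{1/3} ∏_{n≥1} (1-q^{6n-1})(1-q^{6n-5})/(1-q^{6n-3})²`. -/
noncomputable def c (τ : ℂ) : ℂ :=
  Complex.exp (2 * Real.pi * I * τ / 3) *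
    ∏' n : ℕ,
      ((1 - nome τ ^ (6 * (n + 1) - 1)) * (1 - nome τ ^ (6 * (n + 1) - 5)) /
        (1 - nome τ ^ (6 * (n + 1) - 3)) ^ 2)

/-- The Dedekind eta function `η(τ) = e^{πiτ/12} ∏_{n≥1} (1 - e^{2πinτ})`. -/
noncomputable def dedekindEta (τ : ℂ) : ℂ :=
  Complex.exp (Real.pi * I * τ / 12) *
    ∏' n : ℕ, (1 - Complex.exp (2 * Real.pi * I * (n + 1) * τ))

/-- `α(τ) = 3 + 27 η(9τ)³/η(τ)³`. -/
noncomputable def alpha (τ : ℂ) : ℂ :=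
  3 + 27 * dedekindEta (9 * τ) ^ 3 / dedekindEta τ ^ 3

/-- `β(τ) = 3 + η(τ/3)³/η(3τ)³`. -/
noncomputable def beta (τ : ℂ) : ℂ :=
  3 + dedekindEta (τ / 3) ^ 3 / dedekindEta (3 * τ) ^ 3

open Filter Topology

/-- The infinite `q`-Pochhammer symbol `(a; q)_∞ = ∏_{k ≥ 0} (1 - a q^k)`. -/
noncomputable def qPoch (a q : ℂ) : ℂ := ∏' k : ℕ, (1 - a * q ^ k)

/-- The Euler product `(q; q)_∞ = ∏_{k ≥ 1} (1 - q^k)`. -/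
noncomputable def eulerProd (q : ℂ) : ℂ := qPoch q q

section QPochhammer

variable {q : ℂ}

lemma multipliable_qPoch (a : ℂ) (hq : ‖q‖ < 1) : Multipliable fun k : ℕ ↦ 1 - a * q ^ k := by
  have : Summable fun k : ℕ ↦ ‖-(a * q ^ k)‖ := by
    simpa using (summable_geometric_of_lt_one (norm_nonneg q) hq).mul_left ‖a‖
  simpa [sub_eq_add_neg] using multipliable_one_add_of_summable this

lemma hasProd_qPoch (a : ℂ) (hq : ‖q‖ < 1) : HasProd (fun k : ℕ ↦ 1 - a * q ^ k) (qPoch a q) :=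
  (multipliable_qPoch a hq).hasProd

lemma tendsto_qPoch (a : ℂ) (hq : ‖q‖ < 1) :
    Tendsto (fun n ↦ ∏ k ∈ Finset.range n, (1 - a * q ^ k)) atTop (𝓝 (qPoch a q)) :=
  (hasProd_qPoch a hq).tendsto_prod_nat

lemma one_sub_mul_pow_ne_zero {a : ℂ} (ha : ‖a‖ < 1) (hq : ‖q‖ < 1) (k : ℕ) :
    1 - a * q ^ k ≠ 0 := by
  intro h
  have h1 : ‖a * q ^ k‖ = 1 := by rw [← sub_eq_zero.mp h, norm_one]
  have h2 : ‖q‖ ^ k ≤ 1 := pow_le_one₀ (norm_nonneg q) hq.le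
  rw [norm_mul, norm_pow] at h1
  nlinarith [norm_nonneg a]

lemma qPoch_ne_zero {a : ℂ} (ha : ‖a‖ < 1) (hq : ‖q‖ < 1) : qPoch a q ≠ 0 := by
  have : Summable fun k : ℕ ↦ ‖-(a * q ^ k)‖ := by
    simpa using (summable_geometric_of_lt_one (norm_nonneg q) hq).mul_left ‖a‖
  have h := tprod_one_add_ne_zero_of_summable (f := fun k : ℕ ↦ -(a * q ^ k))
    (fun k ↦ by simpa [← sub_eq_add_neg] using one_sub_mul_pow_ne_zero ha hq k) this
  simpa [qPoch, sub_eq_add_neg] using h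

lemma eulerProd_ne_zero (hq : ‖q‖ < 1) : eulerProd q ≠ 0 := qPoch_ne_zero hq hq

lemma norm_pow_lt_one (hq : ‖q‖ < 1) {n : ℕ} (hn : n ≠ 0) : ‖q ^ n‖ < 1 := by
  rw [norm_pow]
  exact pow_lt_one₀ (norm_nonneg q) hq hn

lemma qPoch_eq_one_sub_mul (a : ℂ) (hq : ‖q‖ < 1) : qPoch a q = (1 - a) * qPoch (a * q) q := by
  have h := (tendsto_qPoch a hq).comp (tendsto_add_atTop_nat 1)
  refine tendsto_nhds_unique h (((tendsto_qPoch (a * q) hq).const_mul (1 - a)).congr fun n ↦ ?_)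
  rw [Function.comp_apply, Finset.prod_range_succ', pow_zero, mul_one, mul_comm]
  exact congrArg (· * (1 - a)) (Finset.prod_congr rfl fun k _ ↦ by ring)

lemma qPoch_split_two (a : ℂ) (hq : ‖q‖ < 1) :
    qPoch a q = qPoch a (q ^ 2) * qPoch (a * q) (q ^ 2) := by
  have h := (tendsto_qPoch a hq).comp (tendsto_id.const_mul_atTop' (r := 2) (by norm_num))
  have hq2 := norm_pow_lt_one hq two_ne_zero
  refine tendsto_nhds_unique h
    (((tendsto_qPoch a hq2).mul (tendsto_qPoch (a * q) hq2)).congr fun n ↦ ?_)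
  simp only [Function.comp_apply, id_eq]
  induction n with
  | zero => simp
  | succ n ih =>
    rw [mul_add_one, Finset.prod_range_succ, Finset.prod_range_succ, Finset.prod_range_succ,
      Finset.prod_range_succ, ← ih]
    ring

lemma qPoch_split_three (a : ℂ) (hq : ‖q‖ < 1) :
    qPoch a q = qPoch a (q ^ 3) * qPoch (a * q) (q ^ 3) * qPoch (a * q ^ 2) (q ^ 3) := by
  have h := (tendsto_qPoch a hq).comp (tendsto_id.const_mul_atTop' (r := 3) (by norm_num))
  have hq3 := norm_pow_lt_one hq three_ne_zero
  refine tendsto_nhds_unique h ((((tendsto_qPoch a hq3).mul (tendsto_qPoch (a * q) hq3)).mul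
    (tendsto_qPoch (a * q ^ 2) hq3)).congr fun n ↦ ?_)
  simp only [Function.comp_apply, id_eq]
  induction n with
  | zero => simp
  | succ n ih =>
    rw [mul_add_one, Finset.prod_range_succ, Finset.prod_range_succ, Finset.prod_range_succ,
      Finset.prod_range_succ, Finset.prod_range_succ, Finset.prod_range_succ, ← ih]
    ring

lemma qPoch_mul_qPoch_neg (a : ℂ) (hq : ‖q‖ < 1) :
    qPoch a q * qPoch (-a) q = qPoch (a ^ 2) (q ^ 2) := by
  refine tendsto_nhds_unique ((tendsto_qPoch a hq).mul (tendsto_qPoch (-a) hq))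
    ((tendsto_qPoch (a ^ 2) (norm_pow_lt_one hq two_ne_zero)).congr fun n ↦ ?_)
  rw [← Finset.prod_mul_distrib]
  exact Finset.prod_congr rfl fun k _ ↦ by ring

/-- The reciprocal `1 / (q; q)_m` of the finite `q`-Pochhammer symbol, extended by zero to `m < 0`. -/
noncomputable def invQFact (q : ℂ) : ℤ → ℂ
  | Int.ofNat n => (∏ k ∈ Finset.range n, (1 - q * q ^ k))⁻¹
  | Int.negSucc _ => 0

lemma invQFact_sub_one (hq : ‖q‖ < 1) (m : ℤ) :
    invQFact q (m - 1) = (1 - q ^ m) * invQFact q m := by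
  obtain ⟨n, rfl⟩ | ⟨n, rfl⟩ : (∃ n : ℕ, m = n) ∨ ∃ n : ℕ, m = Int.negSucc n := by
    cases m with
    | ofNat n => exact .inl ⟨n, rfl⟩
    | negSucc n => exact .inr ⟨n, rfl⟩
  · cases n with
    | zero =>
      simp only [Nat.cast_zero, zero_sub, zpow_zero, sub_self, zero_mul]
      rfl
    | succ n =>
      have h := one_sub_mul_pow_ne_zero hq hq n
      have e : ((n + 1 : ℕ) : ℤ) - 1 = Int.ofNat n := by simp
      rw [e, zpow_natCast]
      change (∏ k ∈ Finset.range n, (1 - q * q ^ k))⁻¹ =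
        (1 - q ^ (n + 1)) * (∏ k ∈ Finset.range (n + 1), (1 - q * q ^ k))⁻¹
      rw [Finset.prod_range_succ, mul_inv, pow_succ', mul_comm, mul_assoc, inv_mul_cancel₀ h,
        mul_one]
  · have e : Int.negSucc n - 1 = Int.negSucc (n + 1) := by simp [Int.negSucc_eq]; ring
    rw [e]
    simp [invQFact]

lemma tendsto_invQFact (hq : ‖q‖ < 1) :
    Tendsto (invQFact q) atTop (𝓝 (eulerProd q)⁻¹) := by
  rw [← Nat.map_cast_int_atTop, tendsto_map'_iff]
  exact (tendsto_qPoch q hq).inv₀ (eulerProd_ne_zero hq)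

lemma exists_norm_invQFact_le (hq : ‖q‖ < 1) : ∃ C, ∀ m, ‖invQFact q m‖ ≤ C := by
  obtain ⟨C, hC⟩ := ((tendsto_qPoch q hq).inv₀ (eulerProd_ne_zero hq)).norm.bddAbove_range
  have hC' (n : ℕ) : ‖invQFact q n‖ ≤ C := hC ⟨n, rfl⟩
  refine ⟨C, fun m ↦ ?_⟩
  cases m with
  | ofNat n => exact hC' n
  | negSucc n => simpa [invQFact] using (norm_nonneg _).trans (hC' 0)

end QPochhammer

section JacobiTripleProduct

/-- The two-sided theta series `∑ₙ p^(n²) zⁿ`. -/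
noncomputable def thetaSeries (p z : ℂ) : ℂ := ∑' n : ℤ, p ^ (n ^ 2) * z ^ n

variable {p z : ℂ}

lemma summable_thetaSeries (hp : ‖p‖ < 1) (hp0 : p ≠ 0) (hz : z ≠ 0) :
    Summable fun n : ℤ ↦ p ^ (n ^ 2) * z ^ n := by
  have hpi : (Real.pi : ℂ) ≠ 0 := by exact_mod_cast Real.pi_ne_zero
  have h := (summable_jacobiTheta₂_term_iff (log z / (2 * Real.pi * I))
    (log p / (Real.pi * I))).mpr ?_
  · refine h.congr fun n ↦ ?_
    have e1 : p ^ (n ^ 2) = exp ((n ^ 2 : ℤ) * log p) := by rw [exp_int_mul, exp_log hp0]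
    have e2 : z ^ n = exp (n * log z) := by rw [exp_int_mul, exp_log hz]
    rw [e1, e2, ← exp_add, jacobiTheta₂_term]
    congr 1
    push_cast
    field_simp
    ring
  · have e : log p / (Real.pi * I) = (-(Real.pi⁻¹ : ℝ) : ℂ) * (I * log p) := by
      push_cast
      field_simp
      simp
    have hlog : Real.log ‖p‖ < 0 := Real.log_neg (norm_pos_iff.mpr hp0) hp
    rw [e, ← ofReal_neg, im_ofReal_mul]
    simp only [I_mul_im, log_re]
    have := inv_pos.mpr Real.pi_pos
    nlinarith

/-- The coefficient of `p^(j²) z^j` in the finite form of the triple product. -/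
noncomputable def tripleCoeff (q : ℂ) (n : ℕ) (j : ℤ) : ℂ :=
  (∏ k ∈ Finset.range (2 * n), (1 - q * q ^ k)) * invQFact q (n - j) * invQFact q (n + j)

lemma tripleCoeff_succ {q : ℂ} (hq : ‖q‖ < 1) (hq0 : q ≠ 0) (n : ℕ) (j : ℤ) :
    tripleCoeff q (n + 1) j = (1 + q ^ (2 * n + 1)) * tripleCoeff q n j +
      q ^ (n + 1 - j) * tripleCoeff q n (j - 1) + q ^ (n + 1 + j) * tripleCoeff q n (j + 1) := by
  have hx := invQFact_sub_one hq (n + 1 - j)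
  have hx' := invQFact_sub_one hq (n + 1 - j - 1)
  have hy := invQFact_sub_one hq (n + 1 + j)
  have hy' := invQFact_sub_one hq (n + 1 + j - 1)
  rw [hx, zpow_sub_one₀ hq0] at hx'
  rw [hy, zpow_sub_one₀ hq0] at hy'
  have hxy : q ^ (n + 1 - j : ℤ) * q ^ (n + 1 + j : ℤ) = q ^ (2 * n + 2) := by
    rw [← zpow_add₀ hq0, ← zpow_natCast]
    congr 1
    push_cast
    ring
  unfold tripleCoeff
  rw [show (n : ℤ) - j = n + 1 - j - 1 by ring, show (n : ℤ) + j = n + 1 + j - 1 by ring,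
    show (n : ℤ) - (j - 1) = n + 1 - j by ring, show (n : ℤ) + (j - 1) = n + 1 + j - 1 - 1 by ring,
    show (n : ℤ) - (j + 1) = n + 1 - j - 1 - 1 by ring, show (n : ℤ) + (j + 1) = n + 1 + j by ring,
    hx', hy', hx, hy, mul_add_one, Finset.prod_range_succ, Finset.prod_range_succ, Nat.cast_add_one]
  generalize q ^ (n + 1 - j : ℤ) = x at *
  generalize q ^ (n + 1 + j : ℤ) = y at *
  have h1 : q * q ^ (2 * n) = x * y * q⁻¹ := by rw [hxy]; field_simp; ring
  have h2 : q ^ (2 * n + 1) = x * y * q⁻¹ := by rw [← h1]; ring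
  rw [h1, h2]
  field_simp
  ring

lemma hasSum_finite_triple_product (hp : ‖p‖ < 1) (hp0 : p ≠ 0) (hz : z ≠ 0) (n : ℕ) :
    HasSum (fun j : ℤ ↦ tripleCoeff (p ^ 2) n j * (p ^ (j ^ 2) * z ^ j))
      (∏ k ∈ Finset.range n, ((1 + z * p ^ (2 * k + 1)) * (1 + z⁻¹ * p ^ (2 * k + 1)))) := by
  have hq := norm_pow_lt_one hp two_ne_zero
  induction n with
  | zero =>
    convert hasSum_single (0 : ℤ) fun j hj ↦ ?_
    · simp [tripleCoeff, invQFact]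
    · rcases lt_or_gt_of_ne hj with h | h
      · obtain ⟨m, rfl⟩ := Int.eq_negSucc_of_lt_zero h
        simp [tripleCoeff, invQFact]
      · obtain ⟨m, hm⟩ := Int.eq_negSucc_of_lt_zero (neg_neg_of_pos h)
        simp [tripleCoeff, invQFact, hm]
  | succ n ih =>
    rw [Finset.prod_range_succ]
    have h0 := ih.mul_left (1 + p ^ (4 * n + 2))
    have h1 := ((Equiv.subRight (1 : ℤ)).hasSum_iff.mpr ih).mul_left (z * p ^ (2 * n + 1))
    have h2 := ((Equiv.addRight (1 : ℤ)).hasSum_iff.mpr ih).mul_left (z⁻¹ * p ^ (2 * n + 1))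
    have hval (P : ℂ) : P * ((1 + z * p ^ (2 * n + 1)) * (1 + z⁻¹ * p ^ (2 * n + 1))) =
        (1 + p ^ (4 * n + 2)) * P + z * p ^ (2 * n + 1) * P + z⁻¹ * p ^ (2 * n + 1) * P := by
      field_simp
      ring
    rw [hval]
    refine ((h0.add h1).add h2).congr_fun fun j ↦ ?_
    rw [tripleCoeff_succ hq (pow_ne_zero 2 hp0)]
    simp only [Function.comp_apply, Equiv.subRight_apply, Equiv.coe_addRight]
    have e1 : (p ^ 2) ^ (n + 1 - j : ℤ) * p ^ (j ^ 2) = p ^ (2 * n + 1) * p ^ ((j - 1) ^ 2) := by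
      rw [← zpow_natCast p 2, ← zpow_mul, ← zpow_add₀ hp0, ← zpow_natCast, ← zpow_add₀ hp0]
      congr 1
      push_cast
      ring
    have e2 : (p ^ 2) ^ (n + 1 + j : ℤ) * p ^ (j ^ 2) = p ^ (2 * n + 1) * p ^ ((j + 1) ^ 2) := by
      rw [← zpow_natCast p 2, ← zpow_mul, ← zpow_add₀ hp0, ← zpow_natCast, ← zpow_add₀ hp0]
      congr 1
      push_cast
      ring
    have e3 : z * z ^ (j - 1) = z ^ j := by rw [zpow_sub_one₀ hz]; field_simp
    have e4 : z⁻¹ * z ^ (j + 1) = z ^ j := by rw [zpow_add_one₀ hz]; field_simp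
    linear_combination z ^ j * tripleCoeff (p ^ 2) n (j - 1) * e1 +
      z ^ j * tripleCoeff (p ^ 2) n (j + 1) * e2 -
      p ^ (2 * n + 1) * tripleCoeff (p ^ 2) n (j - 1) * p ^ ((j - 1) ^ 2) * e3 -
      p ^ (2 * n + 1) * tripleCoeff (p ^ 2) n (j + 1) * p ^ ((j + 1) ^ 2) * e4

/-- **Jacobi's triple product identity**. -/
theorem thetaSeries_eq_prod (hp : ‖p‖ < 1) (hp0 : p ≠ 0) (hz : z ≠ 0) :
    thetaSeries p z =
      eulerProd (p ^ 2) * qPoch (-(z * p)) (p ^ 2) * qPoch (-(z⁻¹ * p)) (p ^ 2) := by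
  have hq := norm_pow_lt_one hp two_ne_zero
  have hE := eulerProd_ne_zero hq
  obtain ⟨C, hC⟩ := exists_norm_invQFact_le hq
  obtain ⟨D, hD⟩ := (tendsto_qPoch (p ^ 2) hq).norm.bddAbove_range
  have hD' (n : ℕ) : ‖∏ k ∈ Finset.range n, (1 - p ^ 2 * (p ^ 2) ^ k)‖ ≤ D := hD ⟨n, rfl⟩
  have hC0 := (norm_nonneg _).trans (hC 0)
  have hD0 := (norm_nonneg _).trans (hD' 0)
  have hsum := (summable_thetaSeries hp hp0 hz).norm.mul_left (D * C * C)
  have hlim := tendsto_tsum_of_dominated_convergence (𝓕 := atTop)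
    (f := fun (n : ℕ) (j : ℤ) ↦ tripleCoeff (p ^ 2) n j * (p ^ (j ^ 2) * z ^ j))
    (g := fun j ↦ (eulerProd (p ^ 2))⁻¹ * (p ^ (j ^ 2) * z ^ j)) hsum ?_ ?_
  · have hprod : Tendsto (fun n : ℕ ↦ ∏ k ∈ Finset.range n,
        ((1 + z * p ^ (2 * k + 1)) * (1 + z⁻¹ * p ^ (2 * k + 1)))) atTop
        (𝓝 (qPoch (-(z * p)) (p ^ 2) * qPoch (-(z⁻¹ * p)) (p ^ 2))) := by
      refine ((tendsto_qPoch _ hq).mul (tendsto_qPoch _ hq)).congr fun n ↦ ?_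
      rw [← Finset.prod_mul_distrib]
      exact Finset.prod_congr rfl fun k _ ↦ by ring
    have h := tendsto_nhds_unique
      (hlim.congr fun n ↦ (hasSum_finite_triple_product hp hp0 hz n).tsum_eq) hprod
    rw [tsum_mul_left] at h
    rw [mul_assoc, ← h, mul_inv_cancel_left₀ hE, thetaSeries]
  · intro j
    have h1 := (tendsto_qPoch (p ^ 2) hq).comp
      (tendsto_id.const_mul_atTop' (r := 2) (by norm_num))
    have h2 := (tendsto_invQFact hq).comp
      (tendsto_atTop_add_const_right _ (-j) tendsto_natCast_atTop_atTop)
    have h3 := (tendsto_invQFact hq).comp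
      (tendsto_atTop_add_const_right _ j tendsto_natCast_atTop_atTop)
    have h := ((h1.mul h2).mul h3).mul_const (p ^ (j ^ 2) * z ^ j)
    change Tendsto _ _ (𝓝 (eulerProd (p ^ 2) * _ * _ * _)) at h
    rwa [mul_inv_cancel₀ hE, one_mul] at h
  · refine .of_forall fun n j ↦ ?_
    rw [norm_mul, tripleCoeff, norm_mul, norm_mul]
    gcongr
    exacts [hD' _, hC _, hC _]

end JacobiTripleProduct

section Trisection

variable {p z : ℂ}

lemma thetaSeries_inv (p z : ℂ) : thetaSeries p z⁻¹ = thetaSeries p z := by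
  rw [thetaSeries, ← (Equiv.neg ℤ).tsum_eq]
  exact tsum_congr fun n ↦ by simp

lemma thetaSeries_trisection (hp : ‖p‖ < 1) (hp0 : p ≠ 0) (hz : z ≠ 0) :
    thetaSeries p z = thetaSeries (p ^ 9) (z ^ 3) + p * z * thetaSeries (p ^ 9) (z ^ 3 * p ^ 6) +
      p * z⁻¹ * thetaSeries (p ^ 9) (z ^ 3 * (p ^ 6)⁻¹) := by
  have hs := summable_thetaSeries hp hp0 hz
  have hinj (r : ℤ) : Function.Injective fun m : ℤ ↦ m * 3 + r := fun a b h ↦ by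
    simp only at h
    lia
  have h0 := hs.comp_injective (hinj 0)
  have h1 := hs.comp_injective (hinj 1)
  have h2 := hs.comp_injective (hinj 2)
  have hsplit : thetaSeries p z =
      ∑' m : ℤ, p ^ ((m * 3 + 0) ^ 2) * z ^ (m * 3 + 0) +
      ∑' m : ℤ, p ^ ((m * 3 + 1) ^ 2) * z ^ (m * 3 + 1) +
      ∑' m : ℤ, p ^ ((m * 3 + 2) ^ 2) * z ^ (m * 3 + 2) := by
    have hs' := (Int.divModEquiv 3).symm.summable_iff.mpr hs
    rw [thetaSeries, ← (Int.divModEquiv 3).symm.tsum_eq]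
    refine hs'.tsum_prod.trans ?_
    refine Eq.trans ?_
      (((h0.add h1).tsum_add h2).trans (congrArg (· + tsum _) (h0.tsum_add h1)))
    refine tsum_congr fun m ↦ ?_
    rw [tsum_fintype, Fin.sum_univ_three]
    simp [Int.divModEquiv]
  rw [hsplit]
  congr 1
  · congr 1
    · refine tsum_congr fun m ↦ ?_
      rw [← zpow_natCast p 9, ← zpow_natCast z 3, ← zpow_mul, ← zpow_mul]
      congr 2 <;> push_cast <;> ring
    · rw [thetaSeries, ← tsum_mul_left]
      refine tsum_congr fun m ↦ ?_
      rw [← zpow_natCast p 9, ← zpow_natCast p 6, ← zpow_natCast z 3, mul_zpow, ← zpow_mul,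
        ← zpow_mul, ← zpow_mul, zpow_add_one₀ hz,
        show (m * 3 + 1) ^ 2 = ((9 : ℕ) : ℤ) * m ^ 2 + ((6 : ℕ) : ℤ) * m + 1 by push_cast; ring,
        zpow_add_one₀ hp0, zpow_add₀ hp0, mul_comm m 3]
      push_cast
      ring
  · rw [← (Equiv.subRight (1 : ℤ)).tsum_eq, thetaSeries, ← tsum_mul_left]
    refine tsum_congr fun m ↦ ?_
    rw [Equiv.subRight_apply, ← zpow_natCast p 9, ← zpow_natCast p 6, ← zpow_natCast z 3, mul_zpow,
      inv_zpow', ← zpow_mul, ← zpow_mul, ← zpow_mul,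
      show (m - 1) * 3 + 2 = ((3 : ℕ) : ℤ) * m - 1 by push_cast; ring, zpow_sub_one₀ hz,
      show (((3 : ℕ) : ℤ) * m - 1) ^ 2 = ((9 : ℕ) : ℤ) * m ^ 2 + ((6 : ℕ) : ℤ) * -m + 1 by
        push_cast; ring,
      zpow_add_one₀ hp0, zpow_add₀ hp0]
    ring

end Trisection

section ThetaProducts

variable {t : ℂ}

lemma eulerProd_eq_qPoch_mul (ht : ‖t‖ < 1) :
    eulerProd t = qPoch t (t ^ 2) * eulerProd (t ^ 2) := by
  rw [eulerProd, qPoch_split_two t ht, eulerProd, sq]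

lemma eulerProd_mul_qPoch_neg (ht : ‖t‖ < 1) : eulerProd t * qPoch (-t) t = eulerProd (t ^ 2) :=
  qPoch_mul_qPoch_neg t ht

/-- `φ(-t) = (t; t)_∞² / (t²; t²)_∞`. -/
lemma thetaSeries_neg_one (ht : ‖t‖ < 1) (ht0 : t ≠ 0) :
    thetaSeries t (-1) * eulerProd (t ^ 2) = eulerProd t ^ 2 := by
  rw [thetaSeries_eq_prod ht ht0 (neg_ne_zero.mpr one_ne_zero), eulerProd_eq_qPoch_mul ht]
  norm_num
  ring

/-- `2 ψ(s²) = 2 (s⁴; s⁴)_∞² / (s²; s²)_∞`. -/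
lemma thetaSeries_self {s : ℂ} (hs : ‖s‖ < 1) (hs0 : s ≠ 0) :
    thetaSeries s s * eulerProd (s ^ 2) = 2 * eulerProd (s ^ 4) ^ 2 := by
  have hq := norm_pow_lt_one hs two_ne_zero
  rw [thetaSeries_eq_prod hs hs0 hs0, inv_mul_cancel₀ hs0, qPoch_eq_one_sub_mul (-1) hq,
    show s ^ 4 = (s ^ 2) ^ 2 by ring, ← eulerProd_mul_qPoch_neg hq, ← sq]
  ring_nf

/-- `f(s², s⁴) = (s⁴; s⁴)_∞ (s⁶; s⁶)_∞² / ((s²; s²)_∞ (s¹²; s¹²)_∞)`. -/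
lemma thetaSeries_cube_self {s : ℂ} (hs : ‖s‖ < 1) (hs0 : s ≠ 0) :
    thetaSeries (s ^ 3) s * (eulerProd (s ^ 2) * eulerProd (s ^ 12)) =
      eulerProd (s ^ 4) * eulerProd (s ^ 6) ^ 2 := by
  have hq := norm_pow_lt_one hs two_ne_zero
  have hq6 := norm_pow_lt_one hs (n := 6) (by norm_num)
  have h1 := qPoch_split_three (-s ^ 2) hq
  have h2 := eulerProd_mul_qPoch_neg hq
  have h3 := eulerProd_mul_qPoch_neg hq6
  rw [thetaSeries_eq_prod (norm_pow_lt_one hs three_ne_zero) (pow_ne_zero 3 hs0) hs0]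
  rw [show s⁻¹ * s ^ 3 = s ^ 2 by field_simp]
  ring_nf at h1 h2 h3 ⊢
  rw [← h2, h1, ← h3]
  ring

lemma qPoch_mul_qPoch_pow_five {q : ℂ} (hq : ‖q‖ < 1) :
    qPoch q (q ^ 6) * qPoch (q ^ 5) (q ^ 6) * (eulerProd (q ^ 2) * eulerProd (q ^ 3)) =
      eulerProd q * eulerProd (q ^ 6) := by
  have h1 := qPoch_split_three q (norm_pow_lt_one hq two_ne_zero)
  have h2 := eulerProd_eq_qPoch_mul hq
  have h3 := eulerProd_eq_qPoch_mul (norm_pow_lt_one hq three_ne_zero)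
  ring_nf at h1 h2 h3 ⊢
  rw [h2, h1, h3]
  ring

/-- `f(-q, -q⁵) = (q; q)_∞ (q⁶; q⁶)_∞² / ((q²; q²)_∞ (q³; q³)_∞)`. -/
lemma thetaSeries_cube_neg_sq {q : ℂ} (hq : ‖q‖ < 1) (hq0 : q ≠ 0) :
    thetaSeries (q ^ 3) (-q ^ 2) * (eulerProd (q ^ 2) * eulerProd (q ^ 3)) =
      eulerProd q * eulerProd (q ^ 6) ^ 2 := by
  have h := qPoch_mul_qPoch_pow_five hq
  rw [thetaSeries_eq_prod (norm_pow_lt_one hq three_ne_zero) (pow_ne_zero 3 hq0)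
    (neg_ne_zero.mpr (pow_ne_zero 2 hq0)),
    show -((-q ^ 2)⁻¹ * q ^ 3) = q by field_simp]
  ring_nf at h ⊢
  linear_combination eulerProd (q ^ 6) * h

/-- The three-dissection of `φ(-t)`. -/
lemma thetaSeries_neg_one_trisection (ht : ‖t‖ < 1) (ht0 : t ≠ 0) :
    thetaSeries t (-1) = thetaSeries (t ^ 9) (-1) - 2 * t * thetaSeries (t ^ 9) (-t ^ 6) := by
  rw [thetaSeries_trisection ht ht0 (neg_ne_zero.mpr one_ne_zero),
    ← thetaSeries_inv (t ^ 9) ((-1) ^ 3 * (t ^ 6)⁻¹)]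
  norm_num
  ring

/-- The three-dissection of `2 ψ(s²)`. -/
lemma thetaSeries_self_trisection {s : ℂ} (hs : ‖s‖ < 1) (hs0 : s ≠ 0) :
    thetaSeries s s =
      2 * thetaSeries (s ^ 9) (s ^ 3) + s ^ 2 * thetaSeries (s ^ 9) (s ^ 9) := by
  rw [thetaSeries_trisection hs hs0 hs0, ← thetaSeries_inv (s ^ 9) (s ^ 3 * (s ^ 6)⁻¹),
    mul_inv_cancel₀ hs0, show (s ^ 3 * (s ^ 6)⁻¹)⁻¹ = s ^ 3 by field_simp,
    show s ^ 3 * s ^ 6 = s ^ 9 by ring]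
  ring

end ThetaProducts

section CubicContinuedFraction

variable {t ω : ℂ}

/-- Ramanujan's cubic continued fraction as a function of `t = q^{1/3}`, as a quotient of Euler
products. -/
noncomputable def cubicCF (t : ℂ) : ℂ :=
  t * (eulerProd (t ^ 3) * eulerProd (t ^ 18) ^ 3) / (eulerProd (t ^ 6) * eulerProd (t ^ 9) ^ 3)

lemma cubicCF_mul (hω : ω ^ 3 = 1) (t : ℂ) : cubicCF (ω * t) = ω * cubicCF t := by
  have h (k : ℕ) : (ω * t) ^ (3 * k) = t ^ (3 * k) := by rw [mul_pow, pow_mul, hω, one_pow, one_mul]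
  rw [cubicCF, h 1, h 2, h 3, h 6, cubicCF]
  ring

lemma eulerProd_sq_mul (ht : ‖t‖ < 1) (ht0 : t ≠ 0) :
    eulerProd t ^ 2 * eulerProd (t ^ 18) =
      eulerProd (t ^ 2) * eulerProd (t ^ 9) ^ 2 * (1 - 2 * cubicCF t) := by
  have n6 := eulerProd_ne_zero (norm_pow_lt_one ht (n := 6) (by norm_num))
  have n9 := eulerProd_ne_zero (norm_pow_lt_one ht (n := 9) (by norm_num))
  have h1 := thetaSeries_neg_one ht ht0
  have h9 := thetaSeries_neg_one (norm_pow_lt_one ht (n := 9) (by norm_num)) (pow_ne_zero 9 ht0)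
  have hC := thetaSeries_cube_neg_sq (norm_pow_lt_one ht three_ne_zero) (pow_ne_zero 3 ht0)
  have h := thetaSeries_neg_one_trisection ht ht0
  simp only [← pow_mul, Nat.reduceMul] at h9 hC
  rw [cubicCF, ← h1, h]
  field_simp
  linear_combination eulerProd (t ^ 2) * eulerProd (t ^ 6) * eulerProd (t ^ 9) * h9 -
    2 * t * eulerProd (t ^ 2) * eulerProd (t ^ 18) * hC

lemma eulerProd_sq_mul_cubicCF (ht : ‖t‖ < 1) (ht0 : t ≠ 0) :
    eulerProd (t ^ 2) ^ 2 * eulerProd (t ^ 9) * cubicCF t =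
      t * eulerProd (t ^ 18) ^ 2 * eulerProd t * (1 + cubicCF t) := by
  obtain ⟨s, rfl⟩ : ∃ s : ℂ, s ^ 2 = t := IsAlgClosed.exists_pow_nat_eq t two_pos
  have hs0 : s ≠ 0 := by rintro rfl; simp at ht0
  have hs : ‖s‖ < 1 := by
    rw [norm_pow] at ht
    exact lt_of_pow_lt_pow_left₀ 2 zero_le_one (by simpa using ht)
  have hn (k : ℕ) (hk : k ≠ 0) := eulerProd_ne_zero (norm_pow_lt_one hs hk)
  have n6 := hn 6 (by norm_num)
  have n12 := hn 12 (by norm_num)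
  have n18 := hn 18 (by norm_num)
  have n36 := hn 36 (by norm_num)
  have h1 := thetaSeries_self hs hs0
  have h9 := thetaSeries_self (norm_pow_lt_one hs (n := 9) (by norm_num)) (pow_ne_zero 9 hs0)
  have hD := thetaSeries_cube_self (norm_pow_lt_one hs three_ne_zero) (pow_ne_zero 3 hs0)
  have h := thetaSeries_self_trisection hs hs0
  simp only [← pow_mul, Nat.reduceMul] at h9 hD
  simp only [cubicCF, ← pow_mul, Nat.reduceMul]
  rw [h] at h1
  have hD' := eq_div_of_mul_eq (mul_ne_zero n6 n36) hD
  have h9' := eq_div_of_mul_eq n18 h9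
  rw [hD', h9'] at h1
  field_simp at h1 ⊢
  linear_combination -1 * h1

lemma eulerProd_cube_mul_cubicCF (ht : ‖t‖ < 1) (ht0 : t ≠ 0) :
    eulerProd t ^ 3 * cubicCF t =
      t * eulerProd (t ^ 9) ^ 3 * ((1 + cubicCF t) * (1 - 2 * cubicCF t) ^ 2) := by
  have hn (k : ℕ) (hk : k ≠ 0) := eulerProd_ne_zero (norm_pow_lt_one ht hk)
  have h1 := eulerProd_sq_mul ht ht0
  have h2 := eulerProd_sq_mul_cubicCF ht ht0
  refine mul_left_cancel₀ (mul_ne_zero (mul_ne_zero (eulerProd_ne_zero ht) (hn 9 (by norm_num)))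
    (mul_ne_zero (pow_ne_zero 2 (hn 2 (by norm_num))) (pow_ne_zero 2 (hn 18 (by norm_num))))) ?_
  linear_combination eulerProd t ^ 4 * eulerProd (t ^ 18) ^ 2 * h2 +
    t * eulerProd (t ^ 18) ^ 2 * eulerProd t * (1 + cubicCF t) *
      (eulerProd t ^ 2 * eulerProd (t ^ 18) +
        eulerProd (t ^ 2) * eulerProd (t ^ 9) ^ 2 * (1 - 2 * cubicCF t)) * h1

lemma qPoch_mul_cube_roots (hω : 1 + ω + ω ^ 2 = 0) (a : ℂ) {q : ℂ} (hq : ‖q‖ < 1) :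
    qPoch a q * qPoch (ω * a) q * qPoch (ω ^ 2 * a) q = qPoch (a ^ 3) (q ^ 3) := by
  refine tendsto_nhds_unique (((tendsto_qPoch a hq).mul (tendsto_qPoch (ω * a) hq)).mul
    (tendsto_qPoch (ω ^ 2 * a) hq))
    ((tendsto_qPoch (a ^ 3) (norm_pow_lt_one hq three_ne_zero)).congr fun n ↦ ?_)
  rw [← Finset.prod_mul_distrib, ← Finset.prod_mul_distrib]
  refine Finset.prod_congr rfl fun k _ ↦ ?_
  generalize hx : a * q ^ k = x
  rw [mul_assoc ω, mul_assoc (ω ^ 2), hx, ← pow_mul, mul_comm 3 k, pow_mul, ← mul_pow, hx]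
  linear_combination (x - ω * x ^ 2 + (ω - 1) * x ^ 3) * hω

lemma eulerProd_mul_cube_roots (hω : 1 + ω + ω ^ 2 = 0) (ht : ‖t‖ < 1) :
    eulerProd t * eulerProd (ω * t) * eulerProd (ω ^ 2 * t) * eulerProd (t ^ 9) =
      eulerProd (t ^ 3) ^ 4 := by
  have hω3 : ω ^ 3 = 1 := by linear_combination (ω - 1) * hω
  have hω4 : (ω ^ 2) ^ 2 = ω := by linear_combination ω * hω3
  have ht3 := norm_pow_lt_one ht three_ne_zero
  have split (ζ : ℂ) (hζ : ζ ^ 3 = 1) : eulerProd (ζ * t) =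
      qPoch (ζ * t) (t ^ 3) * qPoch (ζ ^ 2 * t ^ 2) (t ^ 3) * eulerProd (t ^ 3) := by
    have hζt : ‖ζ * t‖ < 1 := by
      rwa [norm_mul, norm_eq_one_of_pow_eq_one hζ three_ne_zero, one_mul]
    have hc : (ζ * t) ^ 3 = t ^ 3 := by rw [mul_pow, hζ, one_mul]
    rw [eulerProd, qPoch_split_three _ hζt, ← sq, ← pow_succ', hc, mul_pow, eulerProd]
  have h0 := split 1 (one_pow 3)
  have h1 := split ω hω3
  have h2 := split (ω ^ 2) (by rw [← pow_mul, mul_comm, pow_mul, hω3, one_pow])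
  have h3 := qPoch_split_three (t ^ 3) ht3
  have r1 := qPoch_mul_cube_roots hω t ht3
  have r2 := qPoch_mul_cube_roots hω (t ^ 2) ht3
  rw [one_pow, one_mul, one_mul] at h0
  rw [hω4] at h2
  simp only [← pow_mul, ← pow_add, Nat.reduceMul, Nat.reduceAdd] at h3 r1 r2
  change eulerProd (t ^ 3) = _ * _ * eulerProd (t ^ 9) at h3
  rw [h0, h1, h2]
  calc _ = (qPoch t (t ^ 3) * qPoch (ω * t) (t ^ 3) * qPoch (ω ^ 2 * t) (t ^ 3)) *
        (qPoch (t ^ 2) (t ^ 3) * qPoch (ω * t ^ 2) (t ^ 3) * qPoch (ω ^ 2 * t ^ 2) (t ^ 3)) *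
        eulerProd (t ^ 9) * eulerProd (t ^ 3) ^ 3 := by ring
    _ = _ := by rw [r1, r2, ← h3]; ring

lemma eulerProd_pow_twelve_mul_cubicCF (ht : ‖t‖ < 1) (ht0 : t ≠ 0) :
    eulerProd (t ^ 3) ^ 12 * cubicCF t ^ 3 =
      t ^ 3 * eulerProd (t ^ 9) ^ 12 * ((1 + cubicCF t ^ 3) * (1 - 8 * cubicCF t ^ 3) ^ 2) := by
  obtain ⟨ω, hω⟩ : ∃ ω : ℂ, 1 + ω + ω ^ 2 = 0 := by
    have hprim := Complex.isPrimitiveRoot_exp 3 three_ne_zero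
    refine ⟨exp (2 * Real.pi * I / (3 : ℕ)), ?_⟩
    have := hprim.geom_sum_eq_zero (by norm_num)
    simpa [Finset.sum_range_succ] using this
  have hω3 : ω ^ 3 = 1 := by linear_combination (ω - 1) * hω
  have hω6 : (ω ^ 2) ^ 3 = 1 := by rw [← pow_mul, mul_comm, pow_mul, hω3, one_pow]
  have hω0 : ω ≠ 0 := by rintro rfl; simp at hω3
  have hn : ‖ω‖ = 1 := norm_eq_one_of_pow_eq_one hω3 three_ne_zero
  have h0 := eulerProd_cube_mul_cubicCF ht ht0
  have h1 := eulerProd_cube_mul_cubicCF (t := ω * t) (by simpa [hn] using ht)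
    (mul_ne_zero hω0 ht0)
  have h2 := eulerProd_cube_mul_cubicCF (t := ω ^ 2 * t) (by simpa [hn] using ht)
    (mul_ne_zero (pow_ne_zero 2 hω0) ht0)
  have hE := eulerProd_mul_cube_roots hω ht
  have e1 : (ω * t) ^ 9 = t ^ 9 := by rw [mul_pow, pow_mul ω 3 3, hω3, one_pow, one_mul]
  have e2 : (ω ^ 2 * t) ^ 9 = t ^ 9 := by rw [mul_pow, pow_mul _ 3 3, hω6, one_pow, one_mul]
  rw [cubicCF_mul hω3, e1] at h1
  rw [cubicCF_mul hω6, e2] at h2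
  generalize cubicCF t = v at *
  have f1 : (1 + v) * (1 + ω * v) * (1 + ω ^ 2 * v) = 1 + v ^ 3 := by
    linear_combination (v + ω * v ^ 2 + (ω - 1) * v ^ 3) * hω
  have f2 : (1 - 2 * v) * (1 - 2 * (ω * v)) * (1 - 2 * (ω ^ 2 * v)) = 1 - 8 * v ^ 3 := by
    linear_combination (-2 * v + 4 * ω * v ^ 2 - 8 * (ω - 1) * v ^ 3) * hω
  calc eulerProd (t ^ 3) ^ 12 * v ^ 3
      = (eulerProd (t ^ 3) ^ 4) ^ 3 * v ^ 3 := by ring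
    _ = eulerProd (t ^ 9) ^ 3 * ((eulerProd t ^ 3 * v) * (eulerProd (ω * t) ^ 3 * (ω * v)) *
        (eulerProd (ω ^ 2 * t) ^ 3 * (ω ^ 2 * v))) := by
      rw [← hE]
      linear_combination -(eulerProd t * eulerProd (ω * t) * eulerProd (ω ^ 2 * t) *
        eulerProd (t ^ 9)) ^ 3 * v ^ 3 * hω3
    _ = eulerProd (t ^ 9) ^ 12 * (ω ^ 3 * t ^ 3) *
        (((1 + v) * (1 + ω * v) * (1 + ω ^ 2 * v)) *
          ((1 - 2 * v) * (1 - 2 * (ω * v)) * (1 - 2 * (ω ^ 2 * v))) ^ 2) := by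
      rw [h0, h1, h2]
      ring
    _ = _ := by rw [f1, f2, hω3]; ring

end CubicContinuedFraction

section ModularParametrization

variable {τ : ℂ}

lemma norm_exp_lt_one_of_im_pos (hτ : 0 < τ.im) : ‖exp (2 * Real.pi * I * τ)‖ < 1 :=
  UpperHalfPlane.norm_exp_two_pi_I_lt_one ⟨τ, hτ⟩

lemma exp_third_pow (τ : ℂ) : exp (2 * Real.pi * I * τ / 3) ^ 3 = nome τ := by
  rw [← exp_nat_mul, nome]
  congr 1
  push_cast
  ring

lemma norm_exp_third_lt_one (hτ : 0 < τ.im) : ‖exp (2 * Real.pi * I * τ / 3)‖ < 1 := by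
  have h := norm_exp_lt_one_of_im_pos (τ := τ / 3) (by simpa using hτ)
  rwa [← mul_div_assoc] at h

lemma dedekindEta_eq (τ : ℂ) :
    dedekindEta τ = exp (Real.pi * I * τ / 12) * eulerProd (nome τ) := by
  rw [dedekindEta, eulerProd, qPoch]
  congr 1
  refine tprod_congr fun n ↦ ?_
  rw [← pow_succ', nome, ← exp_nat_mul]
  congr 2
  push_cast
  ring

lemma dedekindEta_ne_zero (hτ : 0 < τ.im) : dedekindEta τ ≠ 0 := by
  rw [dedekindEta_eq]
  exact mul_ne_zero (exp_ne_zero _) (eulerProd_ne_zero (norm_exp_lt_one_of_im_pos hτ))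

lemma c_eq_cubicCF (hτ : 0 < τ.im) : c τ = cubicCF (exp (2 * Real.pi * I * τ / 3)) := by
  have ht := norm_exp_third_lt_one hτ
  have hc : c τ = exp (2 * Real.pi * I * τ / 3) * ∏' n : ℕ,
      ((1 - nome τ ^ (6 * (n + 1) - 1)) * (1 - nome τ ^ (6 * (n + 1) - 5)) /
        (1 - nome τ ^ (6 * (n + 1) - 3)) ^ 2) := rfl
  rw [hc, ← exp_third_pow]
  generalize exp (2 * Real.pi * I * τ / 3) = t at *
  have hq := norm_pow_lt_one ht three_ne_zero
  have hn (k : ℕ) (hk : k ≠ 0) := norm_pow_lt_one ht hk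
  have h18 := hn 18 (by norm_num)
  have n9 : qPoch (t ^ 9) (t ^ 18) ≠ 0 := qPoch_ne_zero (hn 9 (by norm_num)) h18
  have hprod : HasProd (fun n : ℕ ↦
      (1 - (t ^ 3) ^ (6 * (n + 1) - 1)) * (1 - (t ^ 3) ^ (6 * (n + 1) - 5)) /
        (1 - (t ^ 3) ^ (6 * (n + 1) - 3)) ^ 2)
      (qPoch (t ^ 15) (t ^ 18) * qPoch (t ^ 3) (t ^ 18) / qPoch (t ^ 9) (t ^ 18) ^ 2) := by
    refine (((hasProd_qPoch (t ^ 15) h18).mul (hasProd_qPoch (t ^ 3) h18)).div₀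
      ((hasProd_qPoch (t ^ 9) h18).pow 2) (pow_ne_zero 2 n9)).congr_fun fun n ↦ ?_
    rw [show 6 * (n + 1) - 1 = 6 * n + 5 by lia, show 6 * (n + 1) - 5 = 6 * n + 1 by lia,
      show 6 * (n + 1) - 3 = 6 * n + 3 by lia]
    ring
  rw [hprod.tprod_eq, cubicCF]
  have hE (k : ℕ) (hk : k ≠ 0) := eulerProd_ne_zero (hn k hk)
  have n6 := hE 6 (by norm_num)
  have e9 := hE 9 (by norm_num)
  have h1 := qPoch_mul_qPoch_pow_five hq
  have h2 := eulerProd_eq_qPoch_mul (hn 9 (by norm_num))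
  simp only [← pow_mul, Nat.reduceMul] at h1 h2
  field_simp
  rw [h2] at h1 ⊢
  have n18 := hE 18 (by norm_num)
  refine mul_left_cancel₀ n18 ?_
  linear_combination t * qPoch (t ^ 9) (t ^ 18) ^ 2 * eulerProd (t ^ 18) ^ 3 * h1

lemma c_ne_zero (hτ : 0 < τ.im) : c τ ≠ 0 := by
  have h (k : ℕ) (hk : k ≠ 0) :=
    eulerProd_ne_zero (norm_pow_lt_one (norm_exp_third_lt_one hτ) hk)
  rw [c_eq_cubicCF hτ, cubicCF]
  exact div_ne_zero
    (mul_ne_zero (exp_ne_zero _)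
      (mul_ne_zero (h 3 (by norm_num)) (pow_ne_zero 3 (h 18 (by norm_num)))))
    (mul_ne_zero (h 6 (by norm_num)) (pow_ne_zero 3 (h 9 (by norm_num))))

lemma dedekindEta_cube_mul_c (hτ : 0 < τ.im) :
    dedekindEta (τ / 3) ^ 3 * c τ =
      dedekindEta (3 * τ) ^ 3 * ((1 + c τ) * (1 - 2 * c τ) ^ 2) := by
  have h := eulerProd_cube_mul_cubicCF (norm_exp_third_lt_one hτ) (exp_ne_zero _)
  have h1 : nome (τ / 3) = exp (2 * Real.pi * I * τ / 3) := by rw [nome, mul_div_assoc]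
  have h2 : nome (3 * τ) = exp (2 * Real.pi * I * τ / 3) ^ 9 := by
    rw [nome, ← exp_nat_mul]; congr 1; push_cast; ring
  have h3 : exp (Real.pi * I * (3 * τ) / 12) ^ 3 =
      exp (Real.pi * I * (τ / 3) / 12) ^ 3 * exp (2 * Real.pi * I * τ / 3) := by
    rw [← exp_nat_mul, ← exp_nat_mul, ← exp_add]; congr 1; push_cast; ring
  rw [dedekindEta_eq, dedekindEta_eq, c_eq_cubicCF hτ, h1, h2, mul_pow, mul_pow, h3]
  linear_combination exp (Real.pi * I * (τ / 3) / 12) ^ 3 * h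

lemma dedekindEta_pow_twelve_mul_c (hτ : 0 < τ.im) :
    dedekindEta τ ^ 12 * c τ ^ 3 =
      dedekindEta (3 * τ) ^ 12 * ((1 + c τ ^ 3) * (1 - 8 * c τ ^ 3) ^ 2) := by
  have h := eulerProd_pow_twelve_mul_cubicCF (norm_exp_third_lt_one hτ) (exp_ne_zero _)
  have h2 : nome (3 * τ) = exp (2 * Real.pi * I * τ / 3) ^ 9 := by
    rw [nome, ← exp_nat_mul]; congr 1; push_cast; ring
  have h3 : exp (Real.pi * I * (3 * τ) / 12) ^ 12 =
      exp (Real.pi * I * τ / 12) ^ 12 * exp (2 * Real.pi * I * τ / 3) ^ 3 := by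
    rw [← exp_nat_mul, ← exp_nat_mul, ← exp_nat_mul, ← exp_add]; congr 1; push_cast; ring
  rw [dedekindEta_eq, dedekindEta_eq, c_eq_cubicCF hτ, ← exp_third_pow, h2, mul_pow, mul_pow, h3]
  linear_combination exp (Real.pi * I * τ / 12) ^ 12 * h

lemma dedekindEta_three_mul_pow_twelve (hτ : 0 < τ.im) :
    dedekindEta (3 * τ) ^ 12 =
      27 * dedekindEta (9 * τ) ^ 9 * dedekindEta τ ^ 3 +
        9 * dedekindEta (9 * τ) ^ 6 * dedekindEta τ ^ 6 +
        dedekindEta (9 * τ) ^ 3 * dedekindEta τ ^ 9 := by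
  have hτ3 : 0 < (3 * τ).im := by simpa using hτ
  have h1 := dedekindEta_cube_mul_c hτ3
  have h2 := dedekindEta_pow_twelve_mul_c hτ3
  rw [show 3 * (3 * τ) = 9 * τ by ring] at h1 h2
  rw [mul_div_cancel_left₀ τ three_ne_zero] at h1
  refine mul_right_cancel₀ (pow_ne_zero 3 (c_ne_zero hτ3)) ?_
  generalize c (3 * τ) = v at *
  generalize dedekindEta (9 * τ) = m at *
  generalize dedekindEta (3 * τ) = n at *
  generalize dedekindEta τ = a at *
  generalize hp : (1 + v) * (1 - 2 * v) ^ 2 = p at *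
  have hQ : (1 + v ^ 3) * (1 - 8 * v ^ 3) ^ 2 = p ^ 3 + 9 * v * p ^ 2 + 27 * v ^ 2 * p := by
    rw [← hp]
    ring
  rw [hQ] at h2
  linear_combination h2 - (m ^ 3 * ((a ^ 3 * v) ^ 2 + a ^ 3 * v * (m ^ 3 * p) + (m ^ 3 * p) ^ 2) +
    9 * v * m ^ 6 * (a ^ 3 * v + m ^ 3 * p) + 27 * v ^ 2 * m ^ 9) * h1

lemma alpha_cube_sub (hτ : 0 < τ.im) :
    alpha τ ^ 3 - 27 = 729 * dedekindEta (3 * τ) ^ 12 / dedekindEta τ ^ 12 := by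
  have ha := dedekindEta_ne_zero hτ
  rw [dedekindEta_three_mul_pow_twelve hτ, alpha]
  field_simp
  ring

end ModularParametrization

/-- For `τ` in the upper half-plane: `β(τ)c(τ) = 4c(τ)³ + 1` and
`(α(τ)³ − 27)(c(τ)³ + 1)(8c(τ)³ − 1)² = 729 c(τ)³`. -/
theorem cubicCF_alpha_beta (τ : ℂ) (hτ : 0 < τ.im) :
    beta τ * c τ = 4 * c τ ^ 3 + 1 ∧
    (alpha τ ^ 3 - 27) * (c τ ^ 3 + 1) * (8 * c τ ^ 3 - 1) ^ 2 = 729 * c τ ^ 3 := by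
  have h3 : dedekindEta (3 * τ) ≠ 0 := dedekindEta_ne_zero (by simpa using hτ)
  constructor
  · have h := dedekindEta_cube_mul_c hτ
    rw [beta]
    field_simp
    linear_combination h
  · have h1 := dedekindEta_ne_zero hτ
    have h := dedekindEta_pow_twelve_mul_c hτ
    rw [alpha_cube_sub hτ]
    field_simp
    linear_combination -h
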